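/- Let n ≥ 3 and let G be the graph obtained from K_n by deleting the edges of a star with m edges centered at a fixed vertex v, where 1 ≤ m ≤ n−2. Then G is connected and admits a path decomposition into at most ⌊(n+1)/2⌋ paths. -/

import Mathlib

open SimpleGraph

/-- A path decomposition of `G`: a list of paths such that every edge of `G`
lies in exactly one of them. -/
def IsPathDecomp {V : Type*} (G : SimpleGraph V)
    (P : List (Σ u v : V, G.Walk u v)) : Prop :=
  (∀ p ∈ P, p.2.2.IsPath) ∧
  P.Pairwise (fun p q => ∀ e, e ∈ p.2.2.edges → e ∉ q.2.2.edges) ∧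
  ∀ e, e ∈ G.edgeSet ↔ ∃ p ∈ P, e ∈ p.2.2.edges

/-!
Walecki's zigzags `i, i + 1, i - 1, i + 2, …, i + k` modulo `2 k`, for `i < k`, are Hamiltonian
paths that decompose `K_{2k}`: the sums of the labels along the edges of the `i`-th zigzag are
congruent to `2 i` or `2 i + 1`.

A new vertex `w` is joined to both ends of the `i`-th zigzag by replacing its first edge
`{i, i + 1}` with `i, w, i + k`. The freed edges form an initial segment of the path `0, 1, 2, …`,
which is the one additional path allowed. For `K_{2k+1}` minus a star, only as many of these detours
are used as the degree of the centre `w` requires.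

For `K_{2k+2}` minus a star, `w` is an ordinary vertex and all detours through it are used; the
centre `v` is inserted by a second detour, and the two detours of a zigzag replace its edges
`{i, i + 1}` and `{i + k, i + k + 1}` in either order, so that the freed edges again form an initial
segment of the path `0, 1, 2, …`. This works up to degree `2 k - 1`. The degrees `2 k + 1` and `2 k`
are covered by the zigzags of `K_{2k+2}` itself, with a final edge dropped in the latter case.
-/

/-- The edges traversed by the vertex list `l`, with multiplicity. -/
def pathEdges {V : Type*} (l : List V) : Multiset (Sym2 V) :=
  List.zipWith (s(·, ·)) l l.tail

section

variable {V W : Type*}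

@[simp] lemma pathEdges_cons_cons (a b : V) (l : List V) :
    pathEdges (a :: b :: l) = s(a, b) ::ₘ pathEdges (b :: l) := rfl

lemma pathEdges_cons_of_head? {a b : V} {l : List V} (hb : l.head? = some b) :
    pathEdges (a :: l) = s(a, b) ::ₘ pathEdges l := by
  obtain ⟨m, rfl⟩ := List.head?_eq_some_iff.1 hb
  rfl

lemma pathEdges_append_pair (l : List V) (x y : V) :
    pathEdges (l ++ [x, y]) = s(x, y) ::ₘ pathEdges (l ++ [x]) := by
  induction l with
  | nil => rfl
  | cons a l ih =>
    cases l with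
    | nil => exact Multiset.cons_swap _ _ 0
    | cons b l => simpa [Multiset.cons_swap] using congrArg (s(a, b) ::ₘ ·) ih

@[simp] lemma pathEdges_reverse (l : List V) : pathEdges l.reverse = pathEdges l := by
  induction l with
  | nil => rfl
  | cons a l ih =>
    cases l with
    | nil => rfl
    | cons b l => simpa [pathEdges_append_pair, Sym2.eq_swap] using ih

lemma pathEdges_map (f : V → W) (l : List V) :
    pathEdges (l.map f) = (pathEdges l).map (Sym2.map f) := by
  induction l with
  | nil => rfl
  | cons a l ih =>
    cases l with
    | nil => rfl
    | cons b l => simpa using ih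

lemma pathEdges_map_range_succ (f : ℕ → V) (n : ℕ) :
    pathEdges ((List.range (n + 1)).map f) = ∑ p ∈ Finset.range n, {s(f p, f (p + 1))} := by
  induction n with
  | zero => rfl
  | succ n ih =>
    rw [Finset.sum_range_succ, ← ih, List.range_succ, List.range_succ]
    simp [pathEdges_append_pair, ← Multiset.singleton_add, add_comm]

lemma card_pathEdges (l : List V) : (pathEdges l).card = l.length - 1 := by
  simp [pathEdges]

lemma pathEdges_range_succ (n : ℕ) :
    pathEdges (List.range (n + 1)) = ∑ p ∈ Finset.range n, {s(p, p + 1)} := by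
  simpa using pathEdges_map_range_succ id n

lemma pathEdges_detour {a b w y : V} {l : List V} (hb : l.head? = some b)
    (hy : l.getLast? = some y) :
    pathEdges (a :: w :: l.reverse) + {s(a, b)} = pathEdges (a :: l) + ({s(w, a)} + {s(w, y)}) := by
  rw [pathEdges_cons_cons, pathEdges_cons_of_head? (List.head?_reverse.trans hy),
    pathEdges_cons_of_head? hb, pathEdges_reverse, Sym2.eq_swap (a := a) (b := w)]
  simp only [← Multiset.singleton_add]
  abel

lemma pathEdges_double_detour (a b v w x y : V) (m : List V) :
    pathEdges (y :: w :: a :: v :: b :: (m ++ [x])) + ({s(a, b)} + {s(x, y)}) =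
      pathEdges (a :: b :: m ++ [x, y]) + ({s(w, a)} + {s(w, y)}) + ({s(v, a)} + {s(v, b)}) := by
  rw [pathEdges_append_pair]
  simp only [List.cons_append, pathEdges_cons_cons, ← Multiset.singleton_add,
    Sym2.eq_swap (a := y) (b := w), Sym2.eq_swap (a := a) (b := v), Sym2.eq_swap (a := x) (b := y)]
  abel

/-- `l` is the vertex list of a path in the complete graph on `S`. A path has at least one vertex,
so the empty list is excluded. -/
def IsPathIn (S : Finset V) (l : List V) : Prop :=
  l ≠ [] ∧ l.Nodup ∧ ∀ x ∈ l, x ∈ S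

lemma IsPathIn.cons [DecidableEq V] {S : Finset V} {l : List V} {v : V} (hl : IsPathIn S l)
    (hv : v ∉ S) : IsPathIn (insert v S) (v :: l) :=
  ⟨List.cons_ne_nil v l, List.nodup_cons.2 ⟨fun h => hv (hl.2.2 v h), hl.2.1⟩,
    List.forall_mem_cons.2 ⟨Finset.mem_insert_self v S, fun x hx =>
      Finset.mem_insert_of_mem (hl.2.2 x hx)⟩⟩

lemma IsPathIn.mono {S T : Finset V} {l : List V} (hl : IsPathIn S l) (h : S ⊆ T) :
    IsPathIn T l :=
  ⟨hl.1, hl.2.1, fun x hx => h (hl.2.2 x hx)⟩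

lemma IsPathIn.perm {S : Finset V} {l l' : List V} (hl : IsPathIn S l) (h : l.Perm l') :
    IsPathIn S l' :=
  ⟨fun h' => hl.1 (h' ▸ h).eq_nil, h.nodup_iff.1 hl.2.1, fun x hx => hl.2.2 x (h.mem_iff.2 hx)⟩

lemma isPathIn_range {m n : ℕ} (hm : 0 < m) (h : m ≤ n) :
    IsPathIn (Finset.range n) (List.range m) :=
  ⟨by simpa using hm.ne', List.nodup_range, fun x hx => by
    rw [List.mem_range] at hx
    exact Finset.mem_range.2 (hx.trans_le h)⟩

/-- `E` is the sum of the edge multisets of `K` paths with vertices in `S`, some of which may be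
single vertices. The paths are indexed by `ℕ`, with values from `K` on ignored. -/
def HasPathPartition (S : Finset V) (E : Multiset (Sym2 V)) (K : ℕ) : Prop :=
  ∃ L : ℕ → List V, (∀ i < K, IsPathIn S (L i)) ∧ ∑ i ∈ Finset.range K, pathEdges (L i) = E

lemma HasPathPartition.add_path {S : Finset V} {E : Multiset (Sym2 V)} {K : ℕ}
    (h : HasPathPartition S E K) {l : List V} (hl : IsPathIn S l) :
    HasPathPartition S (E + pathEdges l) (K + 1) := by
  classical
  obtain ⟨L, hL, rfl⟩ := h
  refine ⟨Function.update L K l, fun i hi => ?_, ?_⟩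
  · rcases Nat.lt_succ_iff_lt_or_eq.1 hi with hi | rfl
    · simpa [hi.ne] using hL i hi
    · simpa using hl
  · rw [Finset.sum_range_succ, Function.update_self]
    congr 1
    exact Finset.sum_congr rfl fun i hi => by
      rw [Function.update_of_ne (Finset.mem_range.1 hi).ne]

lemma HasPathPartition.of_sum {S : Finset V} {B R : ℕ → Multiset (Sym2 V)} {k : ℕ}
    (hB : ∀ i < k, ∃ l, IsPathIn S l ∧ pathEdges l + R i = B i)
    {r : List V} (hr : IsPathIn S r) (hR : pathEdges r = ∑ i ∈ Finset.range k, R i) :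
    HasPathPartition S (∑ i ∈ Finset.range k, B i) (k + 1) := by
  choose! L hL using hB
  have hsum : ∑ i ∈ Finset.range k, B i
      = ∑ i ∈ Finset.range k, pathEdges (L i) + pathEdges r := by
    rw [hR, ← Finset.sum_add_distrib]
    exact Finset.sum_congr rfl fun i hi => (hL i (Finset.mem_range.1 hi)).2.symm
  rw [hsum]
  exact HasPathPartition.add_path ⟨L, fun i hi => (hL i hi).1, rfl⟩ hr

lemma HasPathPartition.of_map (f : V ↪ W) {S : Finset V} {E : Multiset (Sym2 V)} {K : ℕ}
    (h : HasPathPartition (S.map f) (E.map (Sym2.map f)) K) : HasPathPartition S E K := by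
  obtain ⟨L, hL, hE⟩ := h
  have exists_lift (i : ℕ) (hi : i < K) : ∃ l : List V, l.map f = L i := by
    rw [← Set.mem_range, Set.range_list_map]
    intro x hx
    obtain ⟨y, -, rfl⟩ := Finset.mem_map.1 ((hL i hi).2.2 x hx)
    exact ⟨y, rfl⟩
  choose! L' hL' using exists_lift
  refine ⟨L', fun i hi => ?_, ?_⟩
  · simpa [IsPathIn, ← hL' i hi, List.nodup_map_iff f.injective] using hL i hi
  · refine Multiset.map_injective (Sym2.map.injective f.injective) (hE.symm ▸ ?_)
    rw [← Multiset.coe_mapAddMonoidHom, map_sum]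
    exact Finset.sum_congr rfl fun i hi => by
      rw [Multiset.coe_mapAddMonoidHom, ← pathEdges_map, hL' i (Finset.mem_range.1 hi)]

lemma multiset_nodup_sum_iff {ι α : Type*} {s : Finset ι} {f : ι → Multiset α} :
    (∑ i ∈ s, f i).Nodup ↔ (∀ i ∈ s, (f i).Nodup) ∧ (s : Set ι).PairwiseDisjoint f := by
  classical
  induction s using Finset.induction_on with
  | empty => simp
  | insert a s ha ih =>
    rw [Finset.sum_insert ha, Multiset.nodup_add, ih, Multiset.disjoint_finsetSum_right,
      Finset.coe_insert, Set.pairwiseDisjoint_insert_of_notMem (by simpa using ha)]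
    simp only [Finset.mem_insert, forall_eq_or_imp, Finset.mem_coe]
    tauto

lemma pathEdges_eq_edges {G : SimpleGraph V} {x y : V} (p : G.Walk x y) :
    pathEdges p.support = p.edges := by
  rw [pathEdges, p.edges_eq_zipWith_support]

lemma isChain_adj_of_pathEdges {G : SimpleGraph V} {l : List V}
    (hl : ∀ e ∈ pathEdges l, e ∈ G.edgeSet) : l.IsChain G.Adj := by
  induction l with
  | nil => exact .nil
  | cons a l ih =>
    cases l with
    | nil => exact .singleton a
    | cons b l =>
      simp only [pathEdges_cons_cons, Multiset.mem_cons, forall_eq_or_imp] at hl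
      exact .cons_cons hl.1 (ih hl.2)

lemma IsPathIn.exists_isPath {G : SimpleGraph V} {S : Finset V} {l : List V} (hl : IsPathIn S l)
    (hG : ∀ e ∈ pathEdges l, e ∈ G.edgeSet) :
    ∃ p : Σ x y : V, G.Walk x y,
      p.2.2.IsPath ∧ (p.2.2.edges : Multiset (Sym2 V)) = pathEdges l := by
  refine ⟨⟨_, _, Walk.ofSupport l hl.1 (isChain_adj_of_pathEdges hG)⟩, ?_, ?_⟩
  · simpa [Walk.isPath_def] using hl.2.1
  · rw [← pathEdges_eq_edges, Walk.support_ofSupport]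

lemma HasPathPartition.exists_isPathDecomp {G : SimpleGraph V} {S : Finset V}
    {E : Multiset (Sym2 V)} {K : ℕ} (h : HasPathPartition S E K) (hE : E.Nodup)
    (hG : ∀ e, e ∈ E ↔ e ∈ G.edgeSet) :
    ∃ P : List (Σ x y : V, G.Walk x y), IsPathDecomp G P ∧ P.length = K := by
  obtain ⟨L, hL, rfl⟩ := h
  have exists_walk (i : Fin K) : ∃ p : Σ x y : V, G.Walk x y,
      p.2.2.IsPath ∧ (p.2.2.edges : Multiset (Sym2 V)) = pathEdges (L i) :=
    (hL i i.2).exists_isPath fun e he =>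
      (hG e).1 (Multiset.mem_sum.2 ⟨i, Finset.mem_range.2 i.2, he⟩)
  choose p p_isPath p_edges using exists_walk
  have mem_edges (i : Fin K) (e : Sym2 V) : e ∈ (p i).2.2.edges ↔ e ∈ pathEdges (L i) := by
    rw [← p_edges, Multiset.mem_coe]
  refine ⟨List.ofFn p, ⟨by simpa [List.forall_mem_ofFn_iff] using p_isPath, ?_, fun e => ?_⟩,
    List.length_ofFn⟩
  · refine List.pairwise_ofFn.2 fun i j hij e hi hj => ?_
    rw [mem_edges] at hi hj
    exact Multiset.disjoint_left.1 ((multiset_nodup_sum_iff.1 hE).2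
      (by simp) (by simp) (Fin.val_injective.ne hij.ne)) hi hj
  · simp only [← hG, Multiset.mem_sum, Finset.mem_range, List.mem_ofFn', Set.exists_range_iff,
      mem_edges, Fin.exists_iff, exists_prop]

/-- The edges joining `v` to the vertices in `N`. -/
def starEdges (v : V) (N : Finset V) : Multiset (Sym2 V) :=
  ∑ u ∈ N, {s(v, u)}

lemma mem_starEdges {v : V} {N : Finset V} {e : Sym2 V} :
    e ∈ starEdges v N ↔ ∃ u ∈ N, e = s(v, u) := by
  simp [starEdges, Multiset.mem_sum]

lemma map_starEdges (f : V ↪ W) (v : V) (N : Finset V) :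
    (starEdges v N).map (Sym2.map f) = starEdges (f v) (N.map f) := by
  simp [starEdges, ← Multiset.coe_mapAddMonoidHom, map_sum]

variable [DecidableEq V]

/-- The edges of the complete graph on `s`. -/
def cliqueEdges (s : Finset V) : Finset (Sym2 V) :=
  s.offDiag.image Sym2.mk.uncurry

lemma mem_cliqueEdges {s : Finset V} {a b : V} :
    s(a, b) ∈ cliqueEdges s ↔ a ∈ s ∧ b ∈ s ∧ a ≠ b := by
  simp only [cliqueEdges, Finset.mem_image, Prod.exists, Finset.mem_offDiag,
    Function.uncurry_apply_pair, Sym2.eq_iff]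
  grind

lemma card_cliqueEdges (s : Finset V) :
    (cliqueEdges s).card = s.card.choose 2 :=
  Sym2.card_image_offDiag s

lemma map_cliqueEdges [DecidableEq W] (f : V ↪ W) (s : Finset V) :
    (cliqueEdges s).val.map (Sym2.map f) = (cliqueEdges (s.map f)).val := by
  have cliqueEdges_map : cliqueEdges (s.map f) = (cliqueEdges s).map f.sym2Map := by
    ext e
    simp only [cliqueEdges, Finset.mem_image, Finset.mem_map, Finset.mem_offDiag, Prod.exists,
      Function.uncurry_apply_pair, Function.Embedding.sym2Map_apply]
    constructor
    · rintro ⟨_, _, ⟨⟨a, ha, rfl⟩, ⟨b, hb, rfl⟩, hab⟩, rfl⟩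
      exact ⟨s(a, b), ⟨a, b, ⟨ha, hb, ne_of_apply_ne f hab⟩, rfl⟩, rfl⟩
    · rintro ⟨_, ⟨a, b, ⟨ha, hb, hab⟩, rfl⟩, rfl⟩
      exact ⟨f a, f b, ⟨⟨a, ha, rfl⟩, ⟨b, hb, rfl⟩, f.injective.ne hab⟩, rfl⟩
  rw [cliqueEdges_map, Finset.map_val]
  rfl

lemma nodup_cliqueEdges_add_starEdges {s N : Finset V} {v : V} (hv : v ∉ s) :
    ((cliqueEdges s).val + starEdges v N).Nodup := by
  rw [Multiset.nodup_add]
  refine ⟨(cliqueEdges s).nodup, ?_, ?_⟩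
  · refine multiset_nodup_sum_iff.2 ⟨fun _ _ => Multiset.nodup_singleton _, ?_⟩
    intro a _ b _ hab
    exact Multiset.singleton_disjoint.2 (by simpa only [Multiset.mem_singleton, Sym2.congr_right])
  · rw [Multiset.disjoint_right]
    intro e he
    obtain ⟨u, -, rfl⟩ := mem_starEdges.1 he
    simp [mem_cliqueEdges, hv]

lemma cliqueEdges_insert {s : Finset V} {v : V} (hv : v ∉ s) :
    (cliqueEdges (insert v s)).val = (cliqueEdges s).val + starEdges v s := by
  refine ((cliqueEdges _).nodup.ext (nodup_cliqueEdges_add_starEdges hv)).2 fun e => ?_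
  induction e with
  | h a b =>
    simp only [Multiset.mem_add, Finset.mem_val, mem_starEdges, mem_cliqueEdges, Sym2.eq_iff]
    grind

lemma pathEdges_le_cliqueEdges_toFinset {l : List V} (hl : l.Nodup) :
    pathEdges l ≤ (cliqueEdges l.toFinset).val := by
  induction l with
  | nil => exact Multiset.zero_le _
  | cons a l ih =>
    cases l with
    | nil => exact Multiset.zero_le _
    | cons b l =>
      obtain ⟨ha, hl⟩ := List.nodup_cons.1 hl
      rw [List.toFinset_cons, cliqueEdges_insert (by simpa using ha), pathEdges_cons_cons,
        ← Multiset.singleton_add, add_comm]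
      exact add_le_add (ih hl) (Multiset.singleton_le.2 (mem_starEdges.2 ⟨b, by simp, rfl⟩))

lemma cliqueEdges_mono {s t : Finset V} (h : s ⊆ t) :
    cliqueEdges s ⊆ cliqueEdges t :=
  Finset.image_subset_image (Finset.offDiag_mono h)

lemma IsPathIn.pathEdges_le_cliqueEdges {S : Finset V} {l : List V} (hl : IsPathIn S l) :
    pathEdges l ≤ (cliqueEdges S).val :=
  (pathEdges_le_cliqueEdges_toFinset hl.2.1).trans <| Finset.val_le_iff.2 <|
    cliqueEdges_mono fun x hx => hl.2.2 x (List.mem_toFinset.1 hx)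

lemma starEdges_pair {v a b : V} (hab : a ≠ b) :
    starEdges v {a, b} = {s(v, a)} + {s(v, b)} :=
  Finset.sum_pair hab

lemma IsPathIn.detour {S : Finset V} {a w : V} {l : List V}
    (hl : IsPathIn S (a :: l)) (hw : w ∉ S) : IsPathIn (insert w S) (a :: w :: l.reverse) :=
  (hl.cons hw).perm <| (List.Perm.swap a w l).trans <| (l.reverse_perm.symm.cons w).cons a

lemma IsPathIn.double_detour {S : Finset V} {a b v w x y : V} {m : List V}
    (hl : IsPathIn S (a :: b :: m ++ [x, y])) (hw : w ∉ S) (hv : v ∉ insert w S) :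
    IsPathIn (insert v (insert w S)) (y :: w :: a :: v :: b :: (m ++ [x])) :=
  ((hl.cons hw).cons hv).perm <| List.perm_iff_count.2 fun c => by
    simp only [List.count_cons, List.count_append, List.cons_append]
    omega

end

section zigzag

/-- The vertex in position `p` of the Walecki zigzag `i, i + 1, i - 1, i + 2, …` modulo `2 * k`,
reduced to `[0, 2 * k)` for `i < k` and `p < 2 * k`. -/
def zigzagVertex (k i p : ℕ) : ℕ :=
  if p % 2 = 1 then i + (p + 1) / 2 else if p / 2 ≤ i then i - p / 2 else i + 2 * k - p / 2

/-- The `i`-th Walecki zigzag, a Hamiltonian path of the complete graph on `range (2 * k)`. -/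
def zigzag (k i : ℕ) : List ℕ :=
  (List.range (2 * k)).map (zigzagVertex k i)

variable {k i p a b : ℕ}

lemma zigzagVertex_lt (hi : i < k) (hp : p < 2 * k) : zigzagVertex k i p < 2 * k := by
  unfold zigzagVertex
  split_ifs <;> omega

lemma zigzagVertex_injOn (hi : i < k) : Set.InjOn (zigzagVertex k i) (Set.Iio (2 * k)) := by
  intro p hp q hq h
  simp only [Set.mem_Iio] at hp hq
  unfold zigzagVertex at h
  split_ifs at h <;> omega

lemma isPathIn_zigzag (hi : i < k) : IsPathIn (Finset.range (2 * k)) (zigzag k i) := by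
  refine ⟨by simpa [zigzag] using Nat.ne_zero_of_lt hi, ?_, ?_⟩
  · exact List.nodup_range.map_on fun p hp q hq =>
      zigzagVertex_injOn hi (List.mem_range.1 hp) (List.mem_range.1 hq)
  · simpa [zigzag] using fun p hp => zigzagVertex_lt hi hp

lemma zigzag_eq_cons (hi : i < k) :
    ∃ l, zigzag k i = i :: l ∧ l.head? = some (i + 1) ∧ l.getLast? = some (i + k) := by
  obtain ⟨k, rfl⟩ := Nat.exists_eq_succ_of_ne_zero (Nat.ne_zero_of_lt hi)
  have first : zigzagVertex k.succ i 0 = i := by simp [zigzagVertex]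
  have second : zigzagVertex k.succ i 1 = i + 1 := by simp [zigzagVertex]
  have last : zigzagVertex k.succ i (2 * k + 1) = i + k.succ := by
    rw [zigzagVertex, if_pos (by omega)]
    omega
  have two_mul_succ : 2 * k.succ = 2 * k + 1 + 1 := by omega
  refine ⟨(List.range (2 * k + 1)).map fun p => zigzagVertex k.succ i (p + 1), ?_, ?_, ?_⟩
  · simp [zigzag, two_mul_succ, List.range_succ_eq_map (n := 2 * k + 1), first,
      Function.comp_def]
  · simp [List.range_succ_eq_map, second]
  · simp [List.range_succ, last]

lemma zigzag_eq_cons_cons_append (hi : i + 1 < k) :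
    ∃ l, zigzag k i = i :: (i + 1) :: l ++ [i + k + 1, i + k] := by
  obtain ⟨k, rfl⟩ := Nat.exists_eq_add_of_le (show 2 ≤ k by omega)
  have first : zigzagVertex (2 + k) i 0 = i := by simp [zigzagVertex]
  have second : zigzagVertex (2 + k) i 1 = i + 1 := by simp [zigzagVertex]
  have penultimate : zigzagVertex (2 + k) i (2 + 2 * k) = i + (2 + k) + 1 := by
    rw [zigzagVertex, if_neg (by omega), if_neg (by omega)]
    omega
  have last : zigzagVertex (2 + k) i (2 + 2 * k + 1) = i + (2 + k) := by
    rw [zigzagVertex, if_pos (by omega)]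
    omega
  have two_mul_add : 2 * (2 + k) = 2 + 2 * k + 2 := by omega
  refine ⟨(List.range (2 * k)).map fun p => zigzagVertex (2 + k) i (2 + p), ?_⟩
  rw [zigzag, two_mul_add, List.range_add, List.range_add]
  simp [List.range_succ, Function.comp_def, first, second, penultimate, last]

lemma zigzagVertex_add_succ (hp : p + 1 < 2 * k) :
    (zigzagVertex k i p + zigzagVertex k i (p + 1)) / 2 = i ∨
      (zigzagVertex k i p + zigzagVertex k i (p + 1)) / 2 = i + k := by
  unfold zigzagVertex
  split_ifs <;> omega

lemma add_div_two_of_mem_pathEdges_zigzag (hi : i < k) (h : s(a, b) ∈ pathEdges (zigzag k i)) :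
    (a + b) / 2 = i ∨ (a + b) / 2 = i + k := by
  obtain ⟨n, hn⟩ : ∃ n, 2 * k = n + 1 := Nat.exists_eq_succ_of_ne_zero (by omega)
  simp only [zigzag, hn, pathEdges_map_range_succ, Multiset.mem_sum, Finset.mem_range,
    Multiset.mem_singleton] at h
  obtain ⟨p, hp, hab⟩ := h
  have := zigzagVertex_add_succ (i := i) (p := p) (by omega : p + 1 < 2 * k)
  rcases Sym2.eq_iff.1 hab with ⟨rfl, rfl⟩ | ⟨rfl, rfl⟩
  · exact this
  · rwa [add_comm]

lemma pairwiseDisjoint_pathEdges_zigzag (k : ℕ) :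
    (Finset.range k : Set ℕ).PairwiseDisjoint fun i => pathEdges (zigzag k i) := by
  intro i hi j hj hij
  simp only [Finset.coe_range, Set.mem_Iio] at hi hj
  refine Multiset.disjoint_left.2 fun {e} => e.ind fun a b hab_i hab_j => ?_
  have := add_div_two_of_mem_pathEdges_zigzag hi hab_i
  have := add_div_two_of_mem_pathEdges_zigzag hj hab_j
  omega

theorem sum_pathEdges_zigzag (k : ℕ) :
    ∑ i ∈ Finset.range k, pathEdges (zigzag k i) = (cliqueEdges (Finset.range (2 * k))).val := by
  have hle (i : ℕ) (hi : i ∈ Finset.range k) :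
      pathEdges (zigzag k i) ≤ (cliqueEdges (Finset.range (2 * k))).val :=
    (isPathIn_zigzag (Finset.mem_range.1 hi)).pathEdges_le_cliqueEdges
  have nodup : (∑ i ∈ Finset.range k, pathEdges (zigzag k i)).Nodup :=
    multiset_nodup_sum_iff.2 ⟨fun i hi => Multiset.nodup_of_le (hle i hi) (Finset.nodup _),
      pairwiseDisjoint_pathEdges_zigzag k⟩
  refine Multiset.eq_of_le_of_card_le ((Multiset.le_iff_subset nodup).2 fun e he => ?_) ?_
  · obtain ⟨i, hi, hei⟩ := Multiset.mem_sum.1 he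
    exact Multiset.mem_of_le (hle i hi) hei
  · rw [Finset.card_val, card_cliqueEdges, Finset.card_range, Multiset.card_sum]
    simp [card_pathEdges, zigzag, Nat.choose_two_right, mul_assoc]
end zigzag

section

variable {k i d : ℕ}

lemma cliqueEdges_range_succ (n : ℕ) :
    (cliqueEdges (Finset.range (n + 1))).val
      = (cliqueEdges (Finset.range n)).val + starEdges n (Finset.range n) := by
  rw [Finset.range_add_one, cliqueEdges_insert Finset.notMem_range_self]

lemma exists_starEdges_eq_sum (v : ℕ) {S : Finset ℕ} {nbr : ℕ → Finset ℕ} (hd : d ≤ 2 * k)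
    (hdisj : (Finset.range k : Set ℕ).PairwiseDisjoint nbr) (hS : ∀ i < k, nbr i ⊆ S)
    (hcard : ∀ i < k, (nbr i).card = (if i < d then 1 else 0) + (if k + i < d then 1 else 0)) :
    ∃ T ⊆ S, T.card = d ∧ starEdges v T = ∑ i ∈ Finset.range k, starEdges v (nbr i) := by
  refine ⟨(Finset.range k).biUnion nbr, Finset.biUnion_subset.2 fun i hi =>
    hS i (Finset.mem_range.1 hi), ?_, Finset.sum_biUnion hdisj⟩
  calc ((Finset.range k).biUnion nbr).card
      = ∑ i ∈ Finset.range k, ((if i < d then 1 else 0) + (if k + i < d then 1 else 0)) := by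
        rw [Finset.card_biUnion hdisj]
        exact Finset.sum_congr rfl fun i hi => hcard i (Finset.mem_range.1 hi)
    _ = ∑ x ∈ Finset.range (2 * k), if x < d then 1 else 0 := by
        rw [two_mul, Finset.sum_range_add, Finset.sum_add_distrib]
    _ = d := by
        have filter_lt : {x ∈ Finset.range (2 * k) | x < d} = Finset.range d := by
          ext x
          simp only [Finset.mem_filter, Finset.mem_range]
          omega
        simp [filter_lt]

/-- The neighbours that the centre of the star gets from the `i`-th zigzag when it has degree `d`
and there are `2 * k` other vertices: none, the first end, or both ends. -/
def evenNbr (k d i : ℕ) : Finset ℕ :=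
  if k + i < d then {i, i + k} else if i < d then {i} else ∅

lemma pairwiseDisjoint_evenNbr (k d : ℕ) :
    (Finset.range k : Set ℕ).PairwiseDisjoint (evenNbr k d) := by
  intro i hi j hj hij
  simp only [Finset.coe_range, Set.mem_Iio] at hi hj
  simp only [Function.onFun, Finset.disjoint_left]
  grind [evenNbr]

lemma evenNbr_subset (hi : i < k) : evenNbr k d i ⊆ Finset.range (2 * k) := by
  intro x hx
  grind [evenNbr]

lemma card_evenNbr (hi : i < k) :
    (evenNbr k d i).card = (if i < d then 1 else 0) + (if k + i < d then 1 else 0) := by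
  unfold evenNbr
  split_ifs <;> first | omega | exact Finset.card_pair (by omega) | rfl

lemma exists_isPathIn_evenNbr (hi : i < k) :
    ∃ l, IsPathIn (Finset.range (2 * k + 1)) l ∧
      pathEdges l + (if k + i < d then {s(i, i + 1)} else 0) =
        pathEdges (zigzag k i) + starEdges (2 * k) (evenNbr k d i) := by
  have hz := isPathIn_zigzag hi
  have hk : 2 * k ∉ Finset.range (2 * k) := Finset.notMem_range_self
  obtain ⟨l, hl, hl_head, hl_last⟩ := zigzag_eq_cons hi
  rw [Finset.range_add_one]
  unfold evenNbr
  split_ifs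
  · refine ⟨i :: 2 * k :: l.reverse, (hl ▸ hz).detour hk, ?_⟩
    rw [starEdges_pair (by omega), hl, pathEdges_detour hl_head hl_last]
  · refine ⟨2 * k :: zigzag k i, hz.cons hk, ?_⟩
    simp [hl, starEdges, ← Multiset.singleton_add, add_comm]
  · exact ⟨zigzag k i, hz.mono (Finset.subset_insert _ _), by simp [starEdges]⟩

lemma sum_range_ite_add_lt {M : Type*} [AddCommMonoid M] (f : ℕ → M) (hd : d ≤ 2 * k) :
    ∑ i ∈ Finset.range k, (if k + i < d then f i else 0) = ∑ i ∈ Finset.range (d - k), f i := by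
  rw [← Finset.sum_filter]
  congr 1
  ext i
  simp only [Finset.mem_filter, Finset.mem_range]
  omega

theorem exists_hasPathPartition_range_even (hd : d ≤ 2 * k) :
    ∃ T ⊆ Finset.range (2 * k), T.card = d ∧ HasPathPartition (Finset.range (2 * k + 1))
      ((cliqueEdges (Finset.range (2 * k))).val + starEdges (2 * k) T) (k + 1) := by
  obtain ⟨T, hT, hcard, hstar⟩ := exists_starEdges_eq_sum (2 * k) hd (pairwiseDisjoint_evenNbr k d)
    (fun i hi => evenNbr_subset hi) (fun i hi => card_evenNbr hi)
  refine ⟨T, hT, hcard, ?_⟩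
  rw [hstar, ← sum_pathEdges_zigzag, ← Finset.sum_add_distrib]
  refine .of_sum (fun i hi => exists_isPathIn_evenNbr hi)
    (isPathIn_range (m := d - k + 1) (by omega) (by omega)) ?_
  rw [pathEdges_range_succ, sum_range_ite_add_lt _ hd]

/-- The neighbours that the centre of the star gets from the `i`-th zigzag when it has degree `d`
and there are `2 * k + 1` other vertices. Pairs of the forms `{i, i + 1}` and `{i + k, i + k + 1}`
alternate, so that those of consecutive zigzags are disjoint; the last one has the second form, so
that it does not meet the single neighbour of the next zigzag. -/
def oddNbr (k d i : ℕ) : Finset ℕ :=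
  if k + i < d then if (d - k - i) % 2 = 0 then {i, i + 1} else {i + k, i + k + 1}
  else if i < d then {i} else ∅

lemma pairwiseDisjoint_oddNbr (hd : d ≤ 2 * k) :
    (Finset.range k : Set ℕ).PairwiseDisjoint (oddNbr k d) := by
  intro i hi j hj hij
  simp only [Finset.coe_range, Set.mem_Iio] at hi hj
  simp only [Function.onFun, Finset.disjoint_left]
  grind [oddNbr]

lemma oddNbr_subset (hi : i < k) : oddNbr k d i ⊆ Finset.range (2 * k + 1) := by
  intro x hx
  grind [oddNbr]

lemma card_oddNbr (k d i : ℕ) :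
    (oddNbr k d i).card = (if i < d then 1 else 0) + (if k + i < d then 1 else 0) := by
  unfold oddNbr
  split_ifs <;> first | omega | simp

lemma exists_isPathIn_double_detour (hi : i + 1 < k) {v w : ℕ}
    (hw : w ∉ Finset.range (2 * k)) (hv : v ∉ insert w (Finset.range (2 * k))) {N : Finset ℕ}
    (hN : N = {i, i + 1} ∨ N = {i + k, i + k + 1}) :
    ∃ l, IsPathIn (insert v (insert w (Finset.range (2 * k)))) l ∧
      pathEdges l + ({s(i, i + 1)} + {s(i + k, i + k + 1)}) =
        pathEdges (zigzag k i) + starEdges w {i, i + k} + starEdges v N := by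
  have hz := isPathIn_zigzag (show i < k by omega)
  obtain ⟨m, hm⟩ := zigzag_eq_cons_cons_append hi
  rcases hN with rfl | rfl
  · refine ⟨_, (hm ▸ hz).double_detour hw hv, ?_⟩
    rw [starEdges_pair (by omega), starEdges_pair (by omega), hm,
      ← pathEdges_double_detour, Sym2.eq_swap (a := i + k)]
  · have hm_rev : (zigzag k i).reverse = (i + k) :: (i + k + 1) :: m.reverse ++ [i + 1, i] := by
      simp [hm]
    refine ⟨_, (hm_rev ▸ hz.perm (List.reverse_perm _).symm).double_detour hw hv, ?_⟩
    rw [starEdges_pair (by omega), starEdges_pair (by omega), ← pathEdges_reverse (zigzag k i),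
      hm_rev, add_comm {s(w, i)}, ← pathEdges_double_detour, Sym2.eq_swap (a := i) (b := i + 1),
      add_comm {s(i + 1, i)}]

lemma exists_isPathIn_oddNbr (hi : i < k) (hd : d < 2 * k) :
    ∃ l, IsPathIn (Finset.range (2 * k + 2)) l ∧
      pathEdges l + ({s(i, i + 1)} + if k + i < d then {s(i + k, i + k + 1)} else 0) =
        pathEdges (zigzag k i) + starEdges (2 * k) {i, i + k}
          + starEdges (2 * k + 1) (oddNbr k d i) := by
  have hw : 2 * k ∉ Finset.range (2 * k) := Finset.notMem_range_self
  have hv : 2 * k + 1 ∉ insert (2 * k) (Finset.range (2 * k)) := by simp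
  obtain ⟨l, hl, hl_head, hl_last⟩ := zigzag_eq_cons hi
  have hdetour := (hl ▸ isPathIn_zigzag hi).detour hw
  have hedges := pathEdges_detour (a := i) (w := 2 * k) hl_head hl_last
  rw [Finset.range_add_one, Finset.range_add_one]
  by_cases hid : k + i < d
  · simp only [oddNbr, if_pos hid]
    exact exists_isPathIn_double_detour (by omega) hw hv (by split_ifs <;> simp)
  · simp only [oddNbr, if_neg hid, starEdges_pair (show i ≠ i + k by omega), hl, ← hedges]
    split_ifs
    · refine ⟨_, hdetour.cons hv, ?_⟩
      simp only [pathEdges_cons_cons, ← Multiset.singleton_add, starEdges, Finset.sum_singleton]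
      abel
    · exact ⟨_, hdetour.mono (Finset.subset_insert _ _), by simp [starEdges]⟩

theorem exists_hasPathPartition_range_odd (hd : d < 2 * k) :
    ∃ T ⊆ Finset.range (2 * k + 1), T.card = d ∧ HasPathPartition (Finset.range (2 * k + 2))
      ((cliqueEdges (Finset.range (2 * k + 1))).val + starEdges (2 * k + 1) T) (k + 1) := by
  obtain ⟨T, hT, hcard, hstar⟩ := exists_starEdges_eq_sum (2 * k + 1) hd.le
    (pairwiseDisjoint_oddNbr hd.le) (fun i hi => oddNbr_subset hi) (fun i _ => card_oddNbr k d i)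
  refine ⟨T, hT, hcard, ?_⟩
  have star_range : starEdges (2 * k) (Finset.range (2 * k))
      = ∑ i ∈ Finset.range k, starEdges (2 * k) {i, i + k} := by
    rw [starEdges, two_mul, Finset.sum_range_add, ← Finset.sum_add_distrib]
    exact Finset.sum_congr rfl fun i hi => by
      rw [starEdges_pair (by have := Finset.mem_range.1 hi; omega), add_comm i k]
  rw [hstar, cliqueEdges_range_succ, star_range, ← sum_pathEdges_zigzag,
    ← Finset.sum_add_distrib, ← Finset.sum_add_distrib]
  refine .of_sum (fun i hi => exists_isPathIn_oddNbr hi hd)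
    (isPathIn_range (m := k + (d - k) + 1) (by omega) (by omega)) ?_
  rw [pathEdges_range_succ, Finset.sum_range_add, Finset.sum_add_distrib,
    sum_range_ite_add_lt _ hd.le]
  simp only [add_comm k]

lemma hasPathPartition_range_add_starEdges_range (k : ℕ) :
    HasPathPartition (Finset.range (2 * k + 2))
      ((cliqueEdges (Finset.range (2 * k + 1))).val
        + starEdges (2 * k + 1) (Finset.range (2 * k + 1))) (k + 1) := by
  rw [← cliqueEdges_range_succ]
  exact ⟨zigzag (k + 1), fun _ => isPathIn_zigzag, sum_pathEdges_zigzag (k + 1)⟩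

lemma hasPathPartition_range_add_starEdges_Ico (k : ℕ) :
    HasPathPartition (Finset.range (2 * k + 2))
      ((cliqueEdges (Finset.range (2 * k + 1))).val
        + starEdges (2 * k + 1) (Finset.Ico 1 (2 * k + 1))) (k + 1) := by
  obtain ⟨l, hl⟩ : ∃ l, zigzag (k + 1) k = l ++ [0, 2 * k + 1] := by
    have penultimate : zigzagVertex (k + 1) k (2 * k) = 0 := by simp [zigzagVertex]
    have last : zigzagVertex (k + 1) k (2 * k + 1) = 2 * k + 1 := by
      rw [zigzagVertex, if_pos (by omega)]
      omega
    exact ⟨(List.range (2 * k)).map (zigzagVertex (k + 1) k),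
      by simp [zigzag, mul_add, List.range_succ, penultimate, last]⟩
  have hl_path : IsPathIn (Finset.range (2 * k + 2)) (l ++ [0]) := by
    obtain ⟨-, hnodup, hmem⟩ : IsPathIn _ _ := hl ▸ isPathIn_zigzag (Nat.lt_succ_self k)
    refine ⟨by simp, hnodup.sublist (by simp), fun x hx => hmem x ?_⟩
    rw [List.append_cons]
    exact List.mem_append_left _ hx
  have star_split : starEdges (2 * k + 1) (Finset.range (2 * k + 1))
      = {s(2 * k + 1, 0)} + starEdges (2 * k + 1) (Finset.Ico 1 (2 * k + 1)) :=
    Finset.sum_range_eq_add_Ico _ (by omega)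
  have hsum := sum_pathEdges_zigzag (k + 1)
  rw [Finset.sum_range_succ, hl, pathEdges_append_pair, mul_add, cliqueEdges_range_succ (2 * k + 1),
    star_split, Sym2.eq_swap, ← Multiset.singleton_add, add_left_comm,
    add_left_comm _ {s(2 * k + 1, 0)}] at hsum
  rw [← add_left_cancel hsum]
  exact .add_path ⟨zigzag (k + 1), fun i hi => isPathIn_zigzag (hi.trans (Nat.lt_succ_self k)), rfl⟩
    hl_path

theorem exists_hasPathPartition_range {n d : ℕ} (hd : d ≤ n) :
    ∃ T ⊆ Finset.range n, T.card = d ∧ HasPathPartition (Finset.range (n + 1))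
      ((cliqueEdges (Finset.range n)).val + starEdges n T) (n / 2 + 1) := by
  obtain ⟨k, rfl | rfl⟩ := Nat.even_or_odd' n
  · simpa using exists_hasPathPartition_range_even hd
  · rw [show (2 * k + 1) / 2 = k by omega]
    obtain hd | rfl | rfl : d < 2 * k ∨ d = 2 * k ∨ d = 2 * k + 1 := by omega
    · exact exists_hasPathPartition_range_odd hd
    · refine ⟨Finset.Ico 1 (2 * k + 1), ?_, by simp,
        hasPathPartition_range_add_starEdges_Ico k⟩
      rw [Finset.range_eq_Ico]
      exact Finset.Ico_subset_Ico_left zero_le_one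
    · exact ⟨_, subset_rfl, Finset.card_range _, hasPathPartition_range_add_starEdges_range k⟩

end

section

variable {V : Type*}

/-- The complete graph without the edges joining `v` to `A`. -/
def completeMinusStar (v : V) (A : Finset V) : SimpleGraph V :=
  (⊤ : SimpleGraph V).deleteEdges {e | ∃ u ∈ A, e = s(v, u)}

lemma completeMinusStar_adj_center {v u : V} {A : Finset V} :
    (completeMinusStar v A).Adj v u ↔ u ≠ v ∧ u ∉ A := by
  simp only [completeMinusStar, deleteEdges_adj, top_adj, Set.mem_ofPred_eq, Sym2.congr_right]
  grind

lemma completeMinusStar_adj_of_ne {v a b : V} {A : Finset V} (ha : a ≠ v) (hb : b ≠ v)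
    (hab : a ≠ b) : (completeMinusStar v A).Adj a b := by
  simp only [completeMinusStar, deleteEdges_adj, top_adj, Set.mem_ofPred_eq, Sym2.eq_iff]
  grind

theorem completeMinusStar_connected {v u : V} {A : Finset V} (huv : u ≠ v) (huA : u ∉ A) :
    (completeMinusStar v A).Connected := by
  refine (connected_iff_exists_forall_reachable _).2 ⟨u, fun w => ?_⟩
  by_cases hwu : w = u
  · exact hwu ▸ .rfl
  by_cases hwv : w = v
  · exact hwv ▸ (completeMinusStar_adj_center.2 ⟨huv, huA⟩).symm.reachable
  · exact (completeMinusStar_adj_of_ne huv hwv (Ne.symm hwu)).reachable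

variable [Fintype V]

lemma exists_embedding_nat {v : V} {N : Finset V} (hvN : v ∉ N) {n : ℕ}
    (hn : Fintype.card V = n + 1) {T : Finset ℕ} (hT : T ⊆ Finset.range n)
    (hNT : N.card = T.card) :
    ∃ f : V ↪ ℕ, f v = n ∧ N.map f = T ∧ Finset.univ.map f = Finset.range (n + 1) := by
  classical
  have hnT : n ∉ T := fun h => by simpa using hT h
  obtain ⟨g, hg⟩ := N.finite_toSet.exists_bijOn_of_encard_eq (t := (T : Set ℕ)) (by simpa)
  let h := Function.update g v n
  have h_eq (u : V) (hu : u ∈ N) : h u = g u :=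
    Function.update_of_ne (ne_of_mem_of_not_mem hu hvN) ..
  have hv : h v = n := Function.update_self ..
  have image_h : N.image h = T := by
    rw [Finset.image_congr h_eq, ← Finset.coe_inj, Finset.coe_image, hg.image_eq]
  obtain ⟨f, hf⟩ := Finset.exists_equiv_extend_of_card_eq (t := Finset.range (n + 1))
    (s := insert v N) (f := h) (by simp [hn])
    (by
      rw [Finset.image_insert, hv, image_h, Finset.range_add_one]
      exact Finset.insert_subset_insert _ hT)
    (by
      rw [Finset.coe_insert, Set.injOn_insert (by simpa), hv]
      exact ⟨hg.injOn.congr fun u hu => (h_eq u hu).symm, by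
        simpa [← Finset.coe_image, image_h] using hnT⟩)
  refine ⟨f.toEmbedding.trans (.subtype _), ?_, ?_, ?_⟩
  · exact (hf v (Finset.mem_insert_self ..)).trans hv
  · rw [Finset.map_eq_image, ← image_h]
    exact Finset.image_congr fun u hu => hf u (Finset.mem_insert_of_mem hu)
  · rw [← Finset.map_map, Finset.map_univ_equiv]
    exact Finset.attach_map_val

lemma hasPathPartition_cliqueEdges_add_starEdges [DecidableEq V] {v : V} {N : Finset V}
    (hv : v ∉ N) : HasPathPartition Finset.univ
      ((cliqueEdges (Finset.univ.erase v)).val + starEdges v N) ((Fintype.card V + 1) / 2) := by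
  obtain ⟨n, hn⟩ := Nat.exists_eq_add_one.2 (Fintype.card_pos_iff.2 ⟨v⟩)
  have card_N : N.card ≤ n := by
    have := Finset.card_lt_univ_of_notMem hv
    omega
  obtain ⟨T, hT, hTN, hpart⟩ := exists_hasPathPartition_range card_N
  obtain ⟨f, hfv, hfN, hf⟩ := exists_embedding_nat hv hn hT hTN.symm
  refine .of_map f ?_
  have map_erase : (Finset.univ.erase v).map f = Finset.range n := by
    rw [Finset.map_erase, hf, hfv, Finset.range_add_one,
      Finset.erase_insert Finset.notMem_range_self]
  rw [Multiset.map_add, map_cliqueEdges, map_starEdges, map_erase, hf, hfv, hfN, hn]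
  convert hpart using 1
  omega

lemma mem_edgeSet_completeMinusStar [DecidableEq V] {v : V} {A : Finset V} {e : Sym2 V} :
    e ∈ (completeMinusStar v A).edgeSet ↔
      e ∈ (cliqueEdges (Finset.univ.erase v)).val + starEdges v (insert v A)ᶜ := by
  induction e with
  | h a b =>
    simp only [Multiset.mem_add, Finset.mem_val, mem_cliqueEdges, mem_starEdges, Finset.mem_erase,
      Finset.mem_univ, Finset.mem_compl, Finset.mem_insert, completeMinusStar, mem_edgeSet,
      deleteEdges_adj, top_adj, Set.mem_ofPred_eq, Sym2.eq_iff]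
    grind

theorem exists_isPathDecomp_completeMinusStar (v : V) (A : Finset V) :
    ∃ P : List (Σ x y : V, (completeMinusStar v A).Walk x y),
      IsPathDecomp (completeMinusStar v A) P ∧ P.length = (Fintype.card V + 1) / 2 := by
  classical
  exact (hasPathPartition_cliqueEdges_add_starEdges (by simp)).exists_isPathDecomp
    (nodup_cliqueEdges_add_starEdges (Finset.notMem_erase _ _))
    fun _ => mem_edgeSet_completeMinusStar.symm

end

theorem gallai_complete_minus_star_general {V : Type*} [Fintype V] (v : V) (A : Finset V)
    (hA : A.card + 2 ≤ Fintype.card V) :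
    (completeMinusStar v A).Connected ∧
    ∃ P : List (Σ x y : V, (completeMinusStar v A).Walk x y),
      IsPathDecomp (completeMinusStar v A) P ∧ P.length = (Fintype.card V + 1) / 2 := by
  classical
  obtain ⟨u, -, hu⟩ : ∃ u ∈ Finset.univ, u ∉ insert v A :=
    Finset.exists_mem_notMem_of_card_lt_card <| (Finset.card_insert_le v A).trans_lt <| by
      rw [Finset.card_univ]
      omega
  obtain ⟨huv, huA⟩ := not_or.1 (Finset.mem_insert.not.1 hu)
  exact ⟨completeMinusStar_connected huv huA, exists_isPathDecomp_completeMinusStar v A⟩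

/-- Gallai's conjecture holds for `K_n` minus a star with `m ≤ n - 2` edges. -/
theorem gallai_complete_minus_star (n m : ℕ) (hn : 3 ≤ n) (hm1 : 1 ≤ m)
    (hm2 : m ≤ n - 2) (v : Fin n) (A : Finset (Fin n)) (hvA : v ∉ A)
    (hA : A.card = m) :
    ((⊤ : SimpleGraph (Fin n)).deleteEdges {e | ∃ u ∈ A, e = s(v, u)}).Connected ∧
    ∃ P : List (Σ x y : Fin n,
        ((⊤ : SimpleGraph (Fin n)).deleteEdges {e | ∃ u ∈ A, e = s(v, u)}).Walk x y),
      IsPathDecomp ((⊤ : SimpleGraph (Fin n)).deleteEdges {e | ∃ u ∈ A, e = s(v, u)}) P ∧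
      P.length ≤ (n + 1) / 2 := by
  obtain ⟨connected, P, hP, hlength⟩ :=
    gallai_complete_minus_star_general v A (by rw [Fintype.card_fin]; omega)
  exact ⟨connected, P, hP, (hlength.trans (by rw [Fintype.card_fin])).le⟩
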